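/- In the symbolic message algebra, let k, w, m, η be pairwise distinct natural numbers and let S₀ := {senc (atom w) (atom k), senc (atom k) (atom m), atom η} (the persistent sealed state: the state key k wrapped under the wrapping key w, the protected state m encrypted under k, and the public salt η). Then atom m ∉ analz S₀, atom k ∉ analz S₀, and atom w ∉ analz S₀. -/

import Mathlib

/-!
The sealed state `S₀` is already closed under the analysis rules: it contains no pair, asymmetric
ciphertext or signature, and the keys `w` and `k` of its two symmetric ciphertexts are not in `S₀`,
whose only atom is `η`. Hence `analz S₀ = S₀`, and none of the atoms `m`, `k`, `w` belongs to it.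
-/

/-- Symbolic message algebra (Dolev–Yao model). -/
inductive Msg where
  | atom : ℕ → Msg
  | pair : Msg → Msg → Msg
  | senc : Msg → Msg → Msg
  | aenc : ℕ → Msg → Msg
  | sig : Msg → Msg → Msg
deriving DecidableEq

/-- `Analz S m`: message `m` is extractable from the set `S` by projection,
symmetric decryption with a known key, asymmetric decryption with a known
private key, or reading the message out of a signature. -/
inductive Analz (S : Set Msg) : Msg → Prop
  | mem {m : Msg} : m ∈ S → Analz S m
  | fst {a b : Msg} : Analz S (Msg.pair a b) → Analz S a
  | snd {a b : Msg} : Analz S (Msg.pair a b) → Analz S b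
  | sdec {k m : Msg} : Analz S (Msg.senc k m) → Analz S k → Analz S m
  | adec {i : ℕ} {m : Msg} : Analz S (Msg.aenc i m) → Analz S (Msg.atom i) → Analz S m
  | sigMsg {k m : Msg} : Analz S (Msg.sig k m) → Analz S m

/-- `analz S` is the least superset of `S` closed under the analysis rules. -/
def analz (S : Set Msg) : Set Msg := {m | Analz S m}

/-- Storage-breach confidentiality (CSB, symbolic core): from the persistent
sealed state alone — the state key `k` wrapped under the wrapping key `w`, the
protected state `m` sealed under `k`, and the public salt `η` — the adversary
recovers neither `m`, nor `k`, nor `w`. -/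
theorem storage_breach_confidentiality
    (k w m η : ℕ)
    (hkw : k ≠ w) (hkm : k ≠ m) (hkη : k ≠ η)
    (hwm : w ≠ m) (hwη : w ≠ η) (hmη : m ≠ η) :
    let S₀ : Set Msg :=
      {Msg.senc (Msg.atom w) (Msg.atom k), Msg.senc (Msg.atom k) (Msg.atom m), Msg.atom η}
    Msg.atom m ∉ analz S₀ ∧ Msg.atom k ∉ analz S₀ ∧ Msg.atom w ∉ analz S₀ := by
  intro S₀
  have fixed : ∀ x, Analz S₀ x → x ∈ S₀ := by
    intro x hx
    induction hx with
    | mem h => exact h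
    | fst _ ih => simp [S₀] at ih
    | snd _ ih => simp [S₀] at ih
    | sdec _ _ ih ihk =>
      -- The ciphertext is one of the two sealed ones, so its key is `w` or `k`;
      -- neither key is in `S₀`, as its only atom is `η`.
      simp only [S₀, Set.mem_insert_iff, Set.mem_singleton_iff, Msg.senc.injEq,
        reduceCtorEq, or_false] at ih
      rcases ih with ⟨rfl, rfl⟩ | ⟨rfl, rfl⟩
      · simp [S₀, hwη] at ihk
      · simp [S₀, hkη] at ihk
    | adec _ _ ih _ => simp [S₀] at ih
    | sigMsg _ ih => simp [S₀] at ih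
  refine ⟨fun h => ?_, fun h => ?_, fun h => ?_⟩
  · simpa [S₀, hmη] using fixed _ h
  · simpa [S₀, hkη] using fixed _ h
  · simpa [S₀, hwη] using fixed _ h
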